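/- Let n ≥ 1 and let p, q : Fin n → (Fin 2 → ℂ) be families of nonzero vectors, representing two points of (ℙ¹(ℂ))ⁿ, and assume p (n-1) 1 ≠ 0 and q (n-1) 1 ≠ 0 (the last coordinates are not [1 : 0]). Then the following are equivalent: (i) there exists x ∈ ℂ such that for every i ∈ Fin n the point of ℙ¹(ℂ) determined by (!![1, x; 0, 1]).mulVec (p i) equals the point determined by q i (i.e. the two tuples lie in the same orbit of the diagonal action of the unipotent group U = { (1 x; 0 1) } on (ℙ¹(ℂ))ⁿ); (ii) for every i ∈ Fin n one has p i 1 = 0 if and only if q i 1 = 0, and for all i, j ∈ Fin n with p i 1 ≠ 0 and p j 1 ≠ 0 one has (p i 0)/(p i 1) − (p j 0)/(p j 1) = (q i 0)/(q i 1) − (q j 0)/(q j 1). -/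

import Mathlib

/-- A unipotent matrix `(1 x; 0 1)` sends nonzero vectors to nonzero vectors. -/
lemma unipotent_mulVec_ne_zero_of_ne_zero (x : ℂ) (v : Fin 2 → ℂ) (hv : v ≠ 0) :
    (!![1, x; 0, 1] : Matrix (Fin 2) (Fin 2) ℂ).mulVec v ≠ 0 := by
  intro h
  apply hv
  have h0 := congrFun h 0
  have h1 := congrFun h 1
  simp [Matrix.mulVec, dotProduct, Fin.sum_univ_two] at h0 h1
  funext i
  fin_cases i
  · simpa [h1] using h0
  · simpa using h1

/-
The matrix `(1 x; 0 1)` fixes `[1 : 0]` and translates the affine coordinate `v 0 / v 1` by `x`.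
So a diagonal orbit of `U` remembers where `[1 : 0]` occurs and, at the other places, a family of
affine coordinates up to a common translation, that is, their differences.
-/

lemma exists_forall_eq_add_iff_sub_eq_sub {ι G : Type*} [AddGroup G] (s : Set ι) (a b : ι → G) :
    (∃ x, ∀ i ∈ s, b i = a i + x) ↔ ∀ i j, i ∈ s → j ∈ s → a i - a j = b i - b j := by
  constructor
  · rintro ⟨x, hx⟩ i j hi hj
    rw [hx i hi, hx j hj, add_sub_add_right_eq_sub]
  · intro h
    obtain rfl | ⟨k, hk⟩ := s.eq_empty_or_nonempty
    · exact ⟨0, by simp⟩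
    · refine ⟨-a k + b k, fun i hi ↦ ?_⟩
      rw [← add_assoc, ← sub_eq_add_neg, h i k hi hk, sub_add_cancel]

section Unipotent

variable {R : Type*} [Semiring R]

lemma unipotent_mulVec (x : R) (v : Fin 2 → R) :
    (!![1, x; 0, 1] : Matrix (Fin 2) (Fin 2) R).mulVec v = ![v 0 + x * v 1, v 1] := by
  rw [Matrix.mulVec_fin_two]
  simp

lemma unipotent_mulVec_ne_zero (x : R) {v : Fin 2 → R} (hv : v ≠ 0) :
    (!![1, x; 0, 1] : Matrix (Fin 2) (Fin 2) R).mulVec v ≠ 0 := by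
  rw [unipotent_mulVec]
  contrapose! hv
  have h₁ : v 1 = 0 := congrFun hv 1
  have h₀ : v 0 + x * v 1 = 0 := congrFun hv 0
  rw [h₁, mul_zero, add_zero] at h₀
  exact funext (Fin.forall_fin_two.2 ⟨h₀, h₁⟩)

end Unipotent

section Field

variable {ι K : Type*} [Field K]

lemma projectivization_mk_eq_mk_iff_div_eq_div {v w : Fin 2 → K} (hv : v ≠ 0) (hw : w ≠ 0) :
    Projectivization.mk K v hv = Projectivization.mk K w hw ↔
      (v 1 = 0 ↔ w 1 = 0) ∧ (v 1 ≠ 0 → v 0 / v 1 = w 0 / w 1) := by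
  classical
  rw [← (OnePoint.equivProjectivization K).symm.injective.eq_iff,
    OnePoint.equivProjectivization_symm_apply_mk, OnePoint.equivProjectivization_symm_apply_mk]
  by_cases hv₁ : v 1 = 0 <;> by_cases hw₁ : w 1 = 0 <;> simp [hv₁, hw₁, div_eq_inv_mul]

lemma mk_unipotent_mulVec_eq_mk_iff (x : K) {v w : Fin 2 → K} (hv : v ≠ 0) (hw : w ≠ 0) :
    Projectivization.mk K ((!![1, x; 0, 1] : Matrix (Fin 2) (Fin 2) K).mulVec v)
        (unipotent_mulVec_ne_zero x hv) = Projectivization.mk K w hw ↔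
      (v 1 = 0 ↔ w 1 = 0) ∧ (v 1 ≠ 0 → w 0 / w 1 = v 0 / v 1 + x) := by
  simp only [unipotent_mulVec, projectivization_mk_eq_mk_iff_div_eq_div, Matrix.cons_val_zero,
    Matrix.cons_val_one]
  refine and_congr_right' (forall_congr' fun hv₁ ↦ ?_)
  rw [add_div, mul_div_cancel_right₀ x hv₁, eq_comm]

theorem unipotent_diagonal_orbit_iff_general (p q : ι → Fin 2 → K)
    (hp : ∀ i, p i ≠ 0) (hq : ∀ i, q i ≠ 0) :
    (∃ x : K, ∀ i,
        Projectivization.mk K ((!![1, x; 0, 1] : Matrix (Fin 2) (Fin 2) K).mulVec (p i))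
            (unipotent_mulVec_ne_zero x (hp i)) =
          Projectivization.mk K (q i) (hq i)) ↔
      ((∀ i, p i 1 = 0 ↔ q i 1 = 0) ∧
        ∀ i j, p i 1 ≠ 0 → p j 1 ≠ 0 →
          p i 0 / p i 1 - p j 0 / p j 1 = q i 0 / q i 1 - q j 0 / q j 1) := by
  simp only [mk_unipotent_mulVec_eq_mk_iff _ (hp _) (hq _), forall_and, exists_and_left]
  exact and_congr_right' <| exists_forall_eq_add_iff_sub_eq_sub {i | p i 1 ≠ 0}
    (fun i ↦ p i 0 / p i 1) (fun i ↦ q i 0 / q i 1)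

end Field

/-- Two `n`-tuples of points of `ℙ¹(ℂ)` whose last coordinates differ from `[1 : 0]`
lie in the same orbit of the diagonal action of the unipotent group
`U = {(1 x; 0 1)} ⊂ SL(2,ℂ)` if and only if, coordinatewise, `[1 : 0]` occurs at the same
places and the differences of the affine coordinates of the remaining points agree. -/
theorem unipotent_diagonal_orbit_iff (n : ℕ) (hn : 1 ≤ n)
    (p q : Fin n → (Fin 2 → ℂ))
    (hp : ∀ i, p i ≠ 0) (hq : ∀ i, q i ≠ 0)
    (hpn : p ⟨n - 1, by omega⟩ 1 ≠ 0) (hqn : q ⟨n - 1, by omega⟩ 1 ≠ 0) :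
    (∃ x : ℂ, ∀ i : Fin n,
        Projectivization.mk ℂ ((!![1, x; 0, 1] : Matrix (Fin 2) (Fin 2) ℂ).mulVec (p i))
            (unipotent_mulVec_ne_zero_of_ne_zero x (p i) (hp i)) =
          Projectivization.mk ℂ (q i) (hq i)) ↔
      ((∀ i : Fin n, p i 1 = 0 ↔ q i 1 = 0) ∧
        ∀ i j : Fin n, p i 1 ≠ 0 → p j 1 ≠ 0 →
          p i 0 / p i 1 - p j 0 / p j 1 = q i 0 / q i 1 - q j 0 / q j 1) :=
  unipotent_diagonal_orbit_iff_general p q hp hq
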